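/- Let n ≥ 2 and 0 < σ < 1. Let G₁ : Γ₊ → (0,∞) be smooth, symmetric, strictly increasing in each argument, positively homogeneous of degree one and inverse concave, and let G₂ : Γ₊ → (0,∞) be smooth, symmetric, strictly increasing in each argument, positively homogeneous of degree one and inverse concave with dual (G₂)_* approaching zero on the boundary of Γ₊. Then F = G₁^σ G₂^{1−σ} is smooth, symmetric, strictly increasing in each argument, positively homogeneous of degree one, inverse concave (indeed F_* = (G₁)_*^σ (G₂)_*^{1−σ}), and its dual F_* approaches zero on the boundary of Γ₊. -/

import Mathlib

open Filter Topology Matrix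

noncomputable section

/-- The open positive cone Γ₊ ⊂ ℝⁿ. -/
def posCone (n : ℕ) : Set (Fin n → ℝ) := {x | ∀ i, 0 < x i}

/-- The dual function f_*(x) = f(x₁⁻¹,…,xₙ⁻¹)⁻¹. -/
def dualF (n : ℕ) (f : (Fin n → ℝ) → ℝ) : (Fin n → ℝ) → ℝ :=
  fun x => (f fun i => (x i)⁻¹)⁻¹

/-- First partial derivative ḟ^i(x) = ∂f/∂x_i(x). -/
def D1 (n : ℕ) (f : (Fin n → ℝ) → ℝ) (x : Fin n → ℝ) (i : Fin n) : ℝ :=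
  fderiv ℝ f x (Pi.single i 1)

/-- Second partial derivative f̈^{ij}(x) = ∂²f/∂x_i∂x_j(x). -/
def D2 (n : ℕ) (f : (Fin n → ℝ) → ℝ) (x : Fin n → ℝ) (i j : Fin n) : ℝ :=
  fderiv ℝ (fun y => fderiv ℝ f y (Pi.single i 1)) x (Pi.single j 1)

/-- Two-point Hoelder inequality for the weighted geometric mean. -/
lemma geom_two_point (σ : ℝ) (hσ0 : 0 < σ) (hσ1 : σ < 1) (s t a b c d : ℝ)
    (hs : 0 ≤ s) (ht : 0 ≤ t) (hst : s + t = 1)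
    (ha : 0 < a) (hb : 0 < b) (hc : 0 < c) (hd : 0 < d) :
    s * (a ^ σ * c ^ (1 - σ)) + t * (b ^ σ * d ^ (1 - σ))
      ≤ (s * a + t * b) ^ σ * (s * c + t * d) ^ (1 - σ) := by
  have hpos : ∀ u v : ℝ, 0 < u → 0 < v → 0 < s * u + t * v := by
    intro u v hu hv
    rcases hs.eq_or_lt with h | h
    · have : t = 1 := by linarith
      subst this
      rw [← h]; linarith
    · have h1 := mul_pos h hu
      have h2 := mul_nonneg ht hv.le
      linarith
  have hA := hpos a b ha hb
  have hC := hpos c d hc hd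
  set A := s * a + t * b with hAdef
  set C := s * c + t * d with hCdef
  have key : ∀ u v : ℝ, 0 < u → 0 < v →
      u ^ σ * v ^ (1 - σ) ≤ (σ * (u / A) + (1 - σ) * (v / C)) * (A ^ σ * C ^ (1 - σ)) := by
    intro u v hu hv
    have h := Real.geom_mean_le_arith_mean2_weighted hσ0.le (sub_pos.2 hσ1).le
      (div_pos hu hA).le (div_pos hv hC).le (by ring)
    rw [Real.div_rpow hu.le hA.le, Real.div_rpow hv.le hC.le] at h
    have hA' := Real.rpow_pos_of_pos hA σ
    have hC' := Real.rpow_pos_of_pos hC (1 - σ)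
    rw [div_mul_div_comm, div_le_iff₀ (mul_pos hA' hC')] at h
    exact h
  have k1 := mul_le_mul_of_nonneg_left (key a c ha hc) hs
  have k2 := mul_le_mul_of_nonneg_left (key b d hb hd) ht
  have e : s * (σ * (a / A) + (1 - σ) * (c / C)) + t * (σ * (b / A) + (1 - σ) * (d / C)) = 1 := by
    have e1 : s * (a / A) + t * (b / A) = 1 := by
      field_simp; exact hAdef.symm
    have e2 : s * (c / C) + t * (d / C) = 1 := by
      field_simp; exact hCdef.symm
    linear_combination σ * e1 + (1 - σ) * e2
  calc _ ≤ _ := add_le_add k1 k2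
    _ = (s * (σ * (a / A) + (1 - σ) * (c / C)) + t * (σ * (b / A) + (1 - σ) * (d / C)))
          * (A ^ σ * C ^ (1 - σ)) := by ring
    _ = _ := by rw [e, one_mul]

lemma posCone_inv {n : ℕ} {x : Fin n → ℝ} (hx : x ∈ posCone n) :
    (fun i => (x i)⁻¹) ∈ posCone n := fun i => inv_pos.2 (hx i)

lemma posCone_open (n : ℕ) : IsOpen (posCone n) := by
  have : posCone n = Set.univ.pi (fun _ => Set.Ioi (0 : ℝ)) := by
    ext x; simp [posCone]
  rw [this]
  exact isOpen_set_pi Set.finite_univ (fun _ _ => isOpen_Ioi)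

lemma concave_bound {n : ℕ} {f : (Fin n → ℝ) → ℝ} (hf : ConcaveOn ℝ (posCone n) f)
    (hp : ∀ x ∈ posCone n, 0 < f x) (M : ℝ) (hM : 0 < M) (z : Fin n → ℝ) (hz : z ∈ posCone n)
    (hzM : ∀ i, z i ≤ M) : f z ≤ 2 * f (fun _ => M) := by
  have hw : (fun i => 2 * M - z i) ∈ posCone n := fun i => by
    have := hzM i
    show 0 < 2 * M - z i
    linarith
  have h := hf.2 hz hw (show (0 : ℝ) ≤ 1 / 2 by norm_num) (show (0 : ℝ) ≤ 1 / 2 by norm_num)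
    (by norm_num)
  have e : (1 / 2 : ℝ) • z + (1 / 2 : ℝ) • (fun i => 2 * M - z i) = fun _ => M := by
    ext i; simp; ring
  rw [e] at h
  have := hp _ hw
  simp only [smul_eq_mul] at h
  linarith

/-- if `G₁` is smooth, symmetric, positive, strictly increasing, 1-homogeneous
and inverse concave, and `G₂` is likewise with dual approaching zero on the boundary of Γ₊,
then for `0 < σ < 1` the function `F = G₁^σ G₂^{1−σ}` is smooth, symmetric, strictly
increasing, 1-homogeneous, has `F_* = (G₁)_*^σ (G₂)_*^{1−σ}`, is inverse concave, and its
dual approaches zero on the boundary of Γ₊. -/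
theorem geometric_mean_inverse_concave (n : ℕ) (hn : 2 ≤ n) (σ : ℝ) (hσ0 : 0 < σ)
    (hσ1 : σ < 1) (G₁ G₂ : (Fin n → ℝ) → ℝ)
    (hG₁smooth : ContDiffOn ℝ (⊤ : ℕ∞) G₁ (posCone n))
    (hG₁sym : ∀ π : Equiv.Perm (Fin n), ∀ x ∈ posCone n, G₁ (x ∘ π) = G₁ x)
    (hG₁pos : ∀ x ∈ posCone n, 0 < G₁ x)
    (hG₁mono : ∀ x ∈ posCone n, ∀ i, 0 < D1 n G₁ x i)
    (hG₁hom : ∀ k : ℝ, 0 < k → ∀ x ∈ posCone n, G₁ (k • x) = k * G₁ x)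
    (hG₁inv : ConcaveOn ℝ (posCone n) (dualF n G₁))
    (hG₂smooth : ContDiffOn ℝ (⊤ : ℕ∞) G₂ (posCone n))
    (hG₂sym : ∀ π : Equiv.Perm (Fin n), ∀ x ∈ posCone n, G₂ (x ∘ π) = G₂ x)
    (hG₂pos : ∀ x ∈ posCone n, 0 < G₂ x)
    (hG₂mono : ∀ x ∈ posCone n, ∀ i, 0 < D1 n G₂ x i)
    (hG₂hom : ∀ k : ℝ, 0 < k → ∀ x ∈ posCone n, G₂ (k • x) = k * G₂ x)
    (hG₂inv : ConcaveOn ℝ (posCone n) (dualF n G₂))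
    (hG₂bdry : ∀ (z : ℕ → Fin n → ℝ) (p : Fin n → ℝ), (∀ j, z j ∈ posCone n) →
      p ∈ frontier (posCone n) → Tendsto z atTop (𝓝 p) →
      Tendsto (fun j => dualF n G₂ (z j)) atTop (𝓝 0)) :
    ContDiffOn ℝ (⊤ : ℕ∞) (fun x => G₁ x ^ σ * G₂ x ^ (1 - σ)) (posCone n) ∧
    (∀ π : Equiv.Perm (Fin n), ∀ x ∈ posCone n,
      G₁ (x ∘ π) ^ σ * G₂ (x ∘ π) ^ (1 - σ) = G₁ x ^ σ * G₂ x ^ (1 - σ)) ∧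
    (∀ x ∈ posCone n, ∀ i, 0 < D1 n (fun y => G₁ y ^ σ * G₂ y ^ (1 - σ)) x i) ∧
    (∀ k : ℝ, 0 < k → ∀ x ∈ posCone n,
      G₁ (k • x) ^ σ * G₂ (k • x) ^ (1 - σ) = k * (G₁ x ^ σ * G₂ x ^ (1 - σ))) ∧
    (∀ x ∈ posCone n, dualF n (fun y => G₁ y ^ σ * G₂ y ^ (1 - σ)) x
        = dualF n G₁ x ^ σ * dualF n G₂ x ^ (1 - σ)) ∧
    ConcaveOn ℝ (posCone n) (dualF n (fun y => G₁ y ^ σ * G₂ y ^ (1 - σ))) ∧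
    (∀ (z : ℕ → Fin n → ℝ) (p : Fin n → ℝ), (∀ j, z j ∈ posCone n) →
      p ∈ frontier (posCone n) → Tendsto z atTop (𝓝 p) →
      Tendsto (fun j => dualF n (fun y => G₁ y ^ σ * G₂ y ^ (1 - σ)) (z j)) atTop (𝓝 0)) := by
  have hτ : 0 < 1 - σ := sub_pos.2 hσ1
  have hd₁ : ∀ x ∈ posCone n, 0 < dualF n G₁ x := fun x hx => inv_pos.2 (hG₁pos _ (posCone_inv hx))
  have hd₂ : ∀ x ∈ posCone n, 0 < dualF n G₂ x := fun x hx => inv_pos.2 (hG₂pos _ (posCone_inv hx))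
  have hdual : ∀ x ∈ posCone n, dualF n (fun y => G₁ y ^ σ * G₂ y ^ (1 - σ)) x
        = dualF n G₁ x ^ σ * dualF n G₂ x ^ (1 - σ) := by
    intro x hx
    have h1 := hG₁pos _ (posCone_inv hx)
    have h2 := hG₂pos _ (posCone_inv hx)
    simp only [dualF]
    rw [Real.inv_rpow h1.le, Real.inv_rpow h2.le, mul_inv]
  refine ⟨?_, ?_, ?_, ?_, hdual, ?_, ?_⟩
  · exact (hG₁smooth.rpow_const_of_ne fun x hx => (hG₁pos x hx).ne').mul
      (hG₂smooth.rpow_const_of_ne fun x hx => (hG₂pos x hx).ne')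
  · intro π x hx
    rw [hG₁sym π x hx, hG₂sym π x hx]
  · intro x hx i
    have hnx := (posCone_open n).mem_nhds hx
    have f1 := ((hG₁smooth.contDiffAt hnx).differentiableAt (by simp)).hasFDerivAt
    have f2 := ((hG₂smooth.contDiffAt hnx).differentiableAt (by simp)).hasFDerivAt
    have p1 := hG₁pos x hx
    have p2 := hG₂pos x hx
    have h := (f1.rpow_const (p := σ) (Or.inl p1.ne')).mul
      (f2.rpow_const (p := 1 - σ) (Or.inl p2.ne'))
    have m1 := hG₁mono x hx i
    have m2 := hG₂mono x hx i
    unfold D1 at m1 m2 ⊢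
    have e : fderiv ℝ (fun y => G₁ y ^ σ * G₂ y ^ (1 - σ)) x = _ := h.fderiv
    rw [e]
    simp only [_root_.add_apply, _root_.smul_apply, smul_eq_mul]
    positivity
  · intro k hk x hx
    have p1 := hG₁pos x hx
    have p2 := hG₂pos x hx
    rw [hG₁hom k hk x hx, hG₂hom k hk x hx, Real.mul_rpow hk.le p1.le, Real.mul_rpow hk.le p2.le]
    have : k ^ σ * k ^ (1 - σ) = k := by
      rw [← Real.rpow_add hk]; simp
    linear_combination (G₁ x ^ σ * G₂ x ^ (1 - σ)) * this
  · refine ⟨hG₁inv.1, ?_⟩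
    intro x hx y hy s t hs ht hst
    have hxy := hG₁inv.1 hx hy hs ht hst
    rw [hdual x hx, hdual y hy, hdual _ hxy]
    have c1 := hG₁inv.2 hx hy hs ht hst
    have c2 := hG₂inv.2 hx hy hs ht hst
    simp only [smul_eq_mul] at c1 c2 ⊢
    refine (geom_two_point σ hσ0 hσ1 s t _ _ _ _ hs ht hst (hd₁ x hx) (hd₁ y hy)
      (hd₂ x hx) (hd₂ y hy)).trans ?_
    have q1 : 0 ≤ s * dualF n G₁ x + t * dualF n G₁ y :=
      add_nonneg (mul_nonneg hs (hd₁ x hx).le) (mul_nonneg ht (hd₁ y hy).le)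
    have q2 : 0 ≤ s * dualF n G₂ x + t * dualF n G₂ y :=
      add_nonneg (mul_nonneg hs (hd₂ x hx).le) (mul_nonneg ht (hd₂ y hy).le)
    exact mul_le_mul (Real.rpow_le_rpow q1 c1 hσ0.le) (Real.rpow_le_rpow q2 c2 hτ.le)
      (Real.rpow_nonneg q2 _) (Real.rpow_nonneg (hd₁ _ hxy).le _)
  · intro z p hz hp hzp
    have h2 := hG₂bdry z p hz hp hzp
    obtain ⟨R, hR⟩ := (Metric.isBounded_range_of_tendsto z hzp).exists_norm_le
    have hzM : ∀ j i, z j i ≤ |R| + 1 := fun j i => by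
      have h3 := hR (z j) ⟨j, rfl⟩
      have h4 := norm_le_pi_norm (z j) i
      have h5 := le_abs_self R
      have h6 : z j i ≤ ‖z j i‖ := Real.le_norm_self _
      linarith
    have hM : 0 < |R| + 1 := by positivity
    have hb := fun j => concave_bound hG₁inv hd₁ _ hM (z j) (hz j) (hzM j)
    set B := 2 * dualF n G₁ (fun _ => |R| + 1)
    have h3 : Tendsto (fun j => B ^ σ * dualF n G₂ (z j) ^ (1 - σ)) atTop (𝓝 0) := by
      have h4 := (h2.rpow_const (p := 1 - σ) (Or.inr hτ.le)).const_mul (B ^ σ)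
      rwa [Real.zero_rpow hτ.ne', mul_zero] at h4
    refine squeeze_zero (fun j => ?_) (fun j => ?_) h3
    · rw [hdual _ (hz j)]
      exact mul_nonneg (Real.rpow_nonneg (hd₁ _ (hz j)).le _) (Real.rpow_nonneg (hd₂ _ (hz j)).le _)
    · rw [hdual _ (hz j)]
      exact mul_le_mul_of_nonneg_right (Real.rpow_le_rpow (hd₁ _ (hz j)).le (hb j) hσ0.le)
        (Real.rpow_nonneg (hd₂ _ (hz j)).le _)
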